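/- Theorem (off-policy representation bound for general latent policies): Let π* be a policy in a finite MDP and d^off a probability distribution on S with d^off(s) > 0 whenever d^{π*}(s) > 0. Let Z be a finite set, φ : S → Z, R_Z : Z×A → [−R_max, R_max], and P_Z a function where P_Z(·|z,a) is a probability distribution on S for every (z,a) satisfying P_Z(s'|φ(s),a) > 0 whenever P(s'|s,a) > 0 and d^off(s) > 0. Define J_R = √( ∑_{s∈S} d^off(s) (1/|A|) ∑_{a∈A} (R(s,a) − R_Z(φ(s),a))² ), J_T = √( (1/2) ∑_{s∈S} d^off(s) (1/|A|) ∑_{a∈A} D_KL(P(·|s,a) ‖ P_Z(·|φ(s),a)) ), and ε = (|A|/(1−γ)) J_R + (2γ|A| R_max/(1−γ)²) J_T. Then for any latent policy π_Z assigning to each z∈Z a probability distribution π_Z(·|z) on A with π_Z(a|z) > 0 for all a,z, PerfDiff(π_Z∘φ, π*) ≤ (1 + D_χ²(d^{π*}‖d^off)^{1/2}) · ε + (2R_max/(1−γ)²) · √( (1/2) ∑_{z∈Z} d^{π*}_Z(z) D_KL(π_{*,Z}(·|z) ‖ π_Z(·|z)) ), where π_Z∘φ is the policy s ↦ π_Z(·|φ(s))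 and d^{π*}_Z, π_{*,Z} are the marginalizations onto Z with respect to d^{π*}. -/

import Mathlib

open Finset

noncomputable section

variable {S A Z : Type*}

/-- State distribution at time `t` when following policy `π` from initial distribution `μ`. -/
def stateDist [Fintype S] [Fintype A] (P : S → A → S → ℝ) (π : S → A → ℝ)
    (μ : S → ℝ) : ℕ → S → ℝ
  | 0 => μ
  | t + 1 => fun s' => ∑ s : S, ∑ a : A, π s a * P s a s' * stateDist P π μ t s

/-- Discounted visitation distribution `d^π`. -/
def visitation [Fintype S] [Fintype A] (P : S → A → S → ℝ) (π : S → A → ℝ)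
    (μ : S → ℝ) (γ : ℝ) (s : S) : ℝ :=
  (1 - γ) * ∑' t : ℕ, γ ^ t * stateDist P π μ t s

/-- Performance `J(π)`. -/
def perf [Fintype S] [Fintype A] (P : S → A → S → ℝ) (R : S → A → ℝ)
    (π : S → A → ℝ) (μ : S → ℝ) (γ : ℝ) : ℝ :=
  ∑' t : ℕ, γ ^ t * ∑ s : S, ∑ a : A, R s a * π s a * stateDist P π μ t s

/-- `PerfDiff(π, π')`. -/
def perfDiff [Fintype S] [Fintype A] (P : S → A → S → ℝ) (R : S → A → ℝ)
    (μ : S → ℝ) (γ : ℝ) (π π' : S → A → ℝ) : ℝ :=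
  |perf P R π μ γ - perf P R π' μ γ|

/-- Total variation distance. -/
def dTV {X : Type*} [Fintype X] (p q : X → ℝ) : ℝ :=
  (1 / 2) * ∑ x : X, |p x - q x|

/-- KL divergence. -/
def dKL {X : Type*} [Fintype X] (p q : X → ℝ) : ℝ :=
  ∑ x : X, p x * Real.log (p x / q x)

/-- Pearson chi-squared divergence (terms with `q x = 0` vanish by the `x / 0 = 0` convention). -/
def dChi2 {X : Type*} [Fintype X] (p q : X → ℝ) : ℝ :=
  ∑ x : X, (p x - q x) ^ 2 / q x

/-- `Err_ρ(π1, π2, F)` for a reward-like function `F`. -/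
def errF [Fintype S] [Fintype A] (ρ : S → ℝ) (π1 π2 : S → A → ℝ) (F : S → A → ℝ) : ℝ :=
  |∑ s : S, ρ s * ∑ a : A, (π1 s a - π2 s a) * F s a|

/-- `Err_ρ(π1, π2, G)` for a transition-like function `G`. -/
def errG [Fintype S] [Fintype A] (ρ : S → ℝ) (π1 π2 : S → A → ℝ) (G : S → A → S → ℝ) : ℝ :=
  ∑ s' : S, |∑ s : S, ρ s * ∑ a : A, (π1 s a - π2 s a) * G s a s'|

/-- Marginalization `ρ_Z` of a state distribution onto `Z` via `φ`. -/
def margDist [Fintype S] [DecidableEq Z] (φ : S → Z) (ρ : S → ℝ) (z : Z) : ℝ :=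
  ∑ s : S, if φ s = z then ρ s else 0

/-- Marginalization `π_Z` of a policy onto `Z` via `φ`, w.r.t. the state distribution `ρ`
(by the `x / 0 = 0` convention it takes a fixed arbitrary value when `ρ_Z(z) = 0`). -/
def margPolicy [Fintype S] [DecidableEq Z] (φ : S → Z) (ρ : S → ℝ) (π : S → A → ℝ)
    (z : Z) (a : A) : ℝ :=
  (∑ s : S, if φ s = z then ρ s * π s a else 0) / margDist φ ρ z

/-- Log-linear (softmax) policy `π_θ(a|z)`. -/
def softmaxPol {d : ℕ} [Fintype A] (θ : A → Fin d → ℝ) (z : Fin d → ℝ) (a : A) : ℝ :=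
  Real.exp (∑ i, θ a i * z i) / ∑ b : A, Real.exp (∑ i, θ b i * z i)

/-- Sum of absolute values of all partial derivatives of `L : ℝ^{d×|A|} → ℝ` at `θ`. -/
def gradL1 {d : ℕ} [Fintype A] [DecidableEq A] (L : (A → Fin d → ℝ) → ℝ)
    (θ : A → Fin d → ℝ) : ℝ :=
  ∑ a : A, ∑ i : Fin d, |fderiv ℝ L θ (Pi.single a (Pi.single i 1))|

lemma aux_log {x : ℝ} (hx : 0 < x) :
    (x-1)*(5*x+1)/(2*x*(x+2)) ≤ Real.log x := by
  set f : ℝ → ℝ := fun x => Real.log x - (x-1)*(5*x+1)/(2*x*(x+2)) with hf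
  have hd : ∀ y : ℝ, 0 < y → HasDerivAt f ((y-1)^3/(y^2*(y+2)^2)) y := by
    intro y hy
    have h1 := Real.hasDerivAt_log hy.ne'
    have hn : HasDerivAt (fun x : ℝ => (x-1)*(5*x+1)) (1*(5*y+1) + (y-1)*(5*1)) y :=
      ((hasDerivAt_id y).sub_const 1).mul (((hasDerivAt_id y).const_mul 5).add_const 1)
    have hdn : HasDerivAt (fun x : ℝ => 2*x*(x+2)) (2*1*(y+2) + 2*y*1) y :=
      ((hasDerivAt_id y).const_mul 2).mul ((hasDerivAt_id y).add_const 2)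
    have := h1.sub (hn.div hdn (by positivity))
    refine this.congr_deriv ?_
    have : y + 2 ≠ 0 := by positivity
    field_simp
    ring
  have h1 : f 1 = 0 := by simp [hf]
  have key : 0 ≤ f x := by
    rw [← h1]
    rcases le_total 1 x with h | h
    · refine monotoneOn_of_deriv_nonneg (convex_Icc 1 x) ?_ ?_ ?_ (Set.left_mem_Icc.2 h)
        (Set.right_mem_Icc.2 h) h
      · exact fun y hy => (hd y (by linarith [hy.1])).continuousAt.continuousWithinAt
      · intro y hy
        rw [interior_Icc] at hy
        exact (hd y (by linarith [hy.1])).differentiableAt.differentiableWithinAt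
      · intro y hy
        rw [interior_Icc] at hy
        rw [(hd y (by linarith [hy.1])).deriv]
        have : 0 ≤ y - 1 := by linarith [hy.1]
        positivity
    · refine antitoneOn_of_deriv_nonpos (convex_Icc x 1) ?_ ?_ ?_ (Set.left_mem_Icc.2 h)
        (Set.right_mem_Icc.2 h) h
      · exact fun y hy => (hd y (by linarith [hy.1])).continuousAt.continuousWithinAt
      · intro y hy
        rw [interior_Icc] at hy
        exact (hd y (by linarith [hy.1])).differentiableAt.differentiableWithinAt
      · intro y hy
        rw [interior_Icc] at hy
        rw [(hd y (by linarith [hy.1])).deriv]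
        have h2 : y - 1 ≤ 0 := by linarith [hy.2]
        apply div_nonpos_of_nonpos_of_nonneg _ (by positivity)
        exact Odd.pow_nonpos (by decide) h2
  have : f x = Real.log x - (x-1)*(5*x+1)/(2*x*(x+2)) := rfl
  linarith

lemma aux_term {p q : ℝ} (hp : 0 ≤ p) (hq : 0 ≤ q) (h : 0 < p → 0 < q) :
    0 ≤ p * Real.log (p/q) - p + q ∧
    |p - q|^2 ≤ ((2*p+4*q)/3) * (p * Real.log (p/q) - p + q) := by
  rw [sq_abs]
  rcases hp.eq_or_lt with h0 | h0
  · subst h0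
    simp [hq]; nlinarith
  · have hq' := h h0
    have hx : 0 < p / q := by positivity
    have := aux_log hx
    have e : (p/q-1)*(5*(p/q)+1)/(2*(p/q)*(p/q+2)) = (p-q)*(5*p+q)/(2*p*(p+2*q)) := by
      field_simp
    rw [e] at this
    have h2 : (p-q)*(5*p+q)/(2*(p+2*q)) ≤ p * Real.log (p/q) := by
      calc _ = p * ((p-q)*(5*p+q)/(2*p*(p+2*q))) := by field_simp
        _ ≤ _ := by gcongr
    have h3 : 3*(p-q)^2/(2*p+4*q) ≤ p * Real.log (p/q) - p + q := by
      have : 3*(p-q)^2/(2*p+4*q) = (p-q)*(5*p+q)/(2*(p+2*q)) - p + q := by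
        field_simp; ring
      linarith
    refine ⟨le_trans (by positivity) h3, ?_⟩
    calc (p-q)^2 = ((2*p+4*q)/3) * (3*(p-q)^2/(2*p+4*q)) := by field_simp
      _ ≤ _ := by gcongr

lemma aux_pinsker {X : Type*} [Fintype X] (p q : X → ℝ) (hp : ∀ x, 0 ≤ p x) (hq : ∀ x, 0 ≤ q x)
    (hp1 : ∑ x, p x = 1) (hq1 : ∑ x, q x = 1) (h : ∀ x, 0 < p x → 0 < q x) :
    (1/2 * ∑ x, |p x - q x|)^2 ≤ 1/2 * dKL p q := by
  have hs : (∑ x, |p x - q x|)^2 ≤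
      (∑ x, ((2*p x+4*q x)/3)) * ∑ x, (p x * Real.log (p x/q x) - p x + q x) := by
    apply Finset.sum_sq_le_sum_mul_sum_of_sq_le_mul
    · intro i _; have := hp i; have := hq i; positivity
    · intro i _; exact (aux_term (hp i) (hq i) (h i)).1
    · intro i _; exact (aux_term (hp i) (hq i) (h i)).2
  have e1 : (∑ x, ((2*p x+4*q x)/3)) = 2 := by
    rw [← Finset.sum_div, Finset.sum_add_distrib, ← Finset.mul_sum, ← Finset.mul_sum, hp1, hq1]
    norm_num
  have e2 : ∑ x, (p x * Real.log (p x/q x) - p x + q x) = dKL p q := by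
    rw [Finset.sum_add_distrib, Finset.sum_sub_distrib, hp1, hq1, dKL]; ring
  rw [e1, e2] at hs
  nlinarith

lemma aux_jensen {X : Type*} [Fintype X] (w g H : X → ℝ) (hw : ∀ x, 0 ≤ w x)
    (hw1 : ∑ x, w x = 1) (h : ∀ x, 0 < w x → (g x)^2 ≤ H x) :
    ∑ x, w x * g x ≤ Real.sqrt (∑ x, w x * H x) := by
  apply Real.le_sqrt_of_sq_le
  have h0 : ∀ x, w x * g x ^ 2 ≤ w x * H x := fun x => by
    rcases (hw x).eq_or_lt with h0 | h0
    · simp [← h0]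
    · exact mul_le_mul_of_nonneg_left (h x h0) h0.le
  have : (∑ x, w x * g x)^2 ≤ (∑ x, w x) * ∑ x, w x * g x ^ 2 := by
    apply Finset.sum_sq_le_sum_mul_sum_of_sq_le_mul
    · intro i _; exact hw i
    · intro i _; have := hw i; positivity
    · intro i _; apply le_of_eq; ring
  rw [hw1, one_mul] at this
  exact this.trans (Finset.sum_le_sum fun x _ => h0 x)

lemma aux_change {X : Type*} [Fintype X] (d w g H : X → ℝ) (hd : ∀ x, 0 ≤ d x)
    (hw : ∀ x, 0 ≤ w x) (hdw : ∀ x, 0 < d x → 0 < w x)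
    (hw1 : ∑ x, w x = 1) (h : ∀ x, 0 < w x → (g x)^2 ≤ H x) :
    ∑ x, d x * g x ≤ (1 + Real.sqrt (dChi2 d w)) * Real.sqrt (∑ x, w x * H x) := by
  have h1 := aux_jensen w g H hw hw1 h
  have h0 : ∀ x, 0 ≤ w x * H x := fun x => by
    rcases (hw x).eq_or_lt with h0 | h0
    · simp [← h0]
    · exact mul_nonneg h0.le ((sq_nonneg _).trans (h x h0))
  have h2 : ∑ x, (d x - w x) * g x ≤ Real.sqrt (dChi2 d w) * Real.sqrt (∑ x, w x * H x) := by
    have hc : ∀ x, 0 ≤ (d x - w x)^2 / w x := fun x => div_nonneg (sq_nonneg _) (hw x)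
    rw [dChi2, ← Real.sqrt_mul (Finset.sum_nonneg fun x _ => hc x)]
    apply Real.le_sqrt_of_sq_le
    apply Finset.sum_sq_le_sum_mul_sum_of_sq_le_mul
    · intro i _; exact hc i
    · intro i _; exact h0 i
    · intro x _
      rcases (hw x).eq_or_lt with h0 | h0
      · have : d x = 0 := by
          by_contra hne
          have := hdw x (lt_of_le_of_ne (hd x) (Ne.symm hne))
          linarith
        simp [← h0, this]
      · calc _ = (d x - w x)^2 / w x * (w x * g x ^ 2) := by field_simp
          _ ≤ _ := by
            have := h x h0
            have := hc x
            gcongr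
  have : ∑ x, d x * g x = ∑ x, w x * g x + ∑ x, (d x - w x) * g x := by
    rw [← Finset.sum_add_distrib]; apply Finset.sum_congr rfl; intros; ring
  rw [this]; linarith

lemma aux_change2 {X A : Type*} [Fintype X] [Fintype A] [Nonempty A] (d w : X → ℝ)
    (g H : X → A → ℝ) (hd : ∀ x, 0 ≤ d x)
    (hw : ∀ x, 0 ≤ w x) (hdw : ∀ x, 0 < d x → 0 < w x)
    (hw1 : ∑ x, w x = 1) (h : ∀ x a, 0 < w x → (g x a)^2 ≤ H x a) :
    ∑ x, d x * ∑ a, g x a ≤ (1 + Real.sqrt (dChi2 d w)) * ((Fintype.card A : ℝ) *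
      Real.sqrt (∑ x, w x * ((1 / (Fintype.card A : ℝ)) * ∑ a, H x a))) := by
  have hA : (0:ℝ) < Fintype.card A := by exact_mod_cast Fintype.card_pos
  have := aux_change d w (fun x => (∑ a, g x a) / Fintype.card A)
    (fun x => (1 / (Fintype.card A : ℝ)) * ∑ a, H x a) hd hw hdw hw1 (by
      intro x hx
      have h1 : (∑ a, g x a)^2 ≤ Fintype.card A * ∑ a, g x a ^2 := by
        simpa using sq_sum_le_card_mul_sum_sq (s := Finset.univ) (f := g x)
      have h2 : ∑ a, g x a ^2 ≤ ∑ a, H x a := Finset.sum_le_sum fun a _ => h x a hx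
      rw [div_pow, div_le_iff₀ (by positivity)]
      calc _ ≤ _ := h1
        _ ≤ Fintype.card A * ∑ a, H x a := by gcongr
        _ = _ := by field_simp)
  have e : ∑ x, d x * ∑ a, g x a
      = Fintype.card A * ∑ x, d x * ((∑ a, g x a) / Fintype.card A) := by
    rw [Finset.mul_sum]; apply Finset.sum_congr rfl; intros; field_simp
  rw [e]
  calc _ ≤ _ := mul_le_mul_of_nonneg_left this hA.le
    _ = _ := by ring

section mdp
variable [Fintype S] [Fintype A]
    (P : S → A → S → ℝ) (hP0 : ∀ s a s', 0 ≤ P s a s')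
    (hP1 : ∀ s a, ∑ s' : S, P s a s' = 1)
    (μ : S → ℝ) (hμ0 : ∀ s, 0 ≤ μ s) (hμ1 : ∑ s : S, μ s = 1)
    (γ : ℝ) (hγ0 : 0 ≤ γ) (hγ1 : γ < 1)
    (π : S → A → ℝ)
    (hπ0 : ∀ s a, 0 ≤ π s a) (hπ1 : ∀ s, ∑ a : A, π s a = 1)

/-- unnormalized visitation -/
def occ (P : S → A → S → ℝ) (π : S → A → ℝ) (μ : S → ℝ) (γ : ℝ) (s : S) : ℝ :=
  ∑' t : ℕ, γ ^ t * stateDist P π μ t s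

include hP0 hμ0 hπ0 in
lemma sd_nonneg (t : ℕ) : ∀ s, 0 ≤ stateDist P π μ t s := by
  induction t with
  | zero => exact hμ0
  | succ t ih =>
    intro s
    exact Finset.sum_nonneg fun s _ => Finset.sum_nonneg fun a _ =>
      mul_nonneg (mul_nonneg (hπ0 _ _) (hP0 _ _ _)) (ih _)

include hP1 hμ1 hπ1 in
lemma sd_sum (t : ℕ) : ∑ s, stateDist P π μ t s = 1 := by
  induction t with
  | zero => exact hμ1
  | succ t ih =>
    simp only [stateDist]
    rw [Finset.sum_comm, ← ih]
    apply Finset.sum_congr rfl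
    intro s _
    rw [Finset.sum_comm]
    simp_rw [← Finset.sum_mul, ← Finset.mul_sum, hP1, mul_one, hπ1, one_mul]

include hP0 hP1 hμ0 hμ1 hπ0 hπ1 hγ0 hγ1 in
lemma sd_summable (s : S) : Summable fun t : ℕ => γ ^ t * stateDist P π μ t s := by
  have h0 := sd_nonneg P hP0 μ hμ0 π hπ0
  refine Summable.of_nonneg_of_le (fun t => mul_nonneg (pow_nonneg hγ0 t) (h0 t s)) ?_
    (summable_geometric_of_lt_one hγ0 hγ1)
  intro t
  have : stateDist P π μ t s ≤ 1 := by
    rw [← sd_sum P hP1 μ hμ1 π hπ1 t]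
    exact Finset.single_le_sum (fun i _ => h0 t i) (Finset.mem_univ s)
  exact mul_le_of_le_one_right (pow_nonneg hγ0 t) this

include hP0 hP1 hμ0 hμ1 hπ0 hπ1 hγ0 hγ1 in
lemma occ_flow (s' : S) :
    occ P π μ γ s' = μ s' + γ * ∑ s, ∑ a, π s a * P s a s' * occ P π μ γ s := by
  have hs := sd_summable P hP0 hP1 μ hμ0 hμ1 γ hγ0 hγ1 π hπ0 hπ1
  have : HasSum (fun t : ℕ => γ * ∑ s, ∑ a, π s a * P s a s' * (γ ^ t * stateDist P π μ t s))
      (γ * ∑ s, ∑ a, π s a * P s a s' * occ P π μ γ s) :=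
    (hasSum_sum fun s _ => hasSum_sum fun a _ => ((hs s).hasSum.mul_left _)).mul_left _
  rw [← this.tsum_eq, occ, (hs s').tsum_eq_zero_add]
  congr 1
  · simp [stateDist]
  · apply tsum_congr
    intro t
    simp only [stateDist, Finset.mul_sum]
    refine Finset.sum_congr rfl fun s _ => Finset.sum_congr rfl fun a _ => ?_
    ring

include hP0 hP1 hμ0 hμ1 hπ0 hπ1 hγ0 hγ1 in
lemma perf_occ (R : S → A → ℝ) :
    perf P R π μ γ = ∑ s, occ P π μ γ s * ∑ a, π s a * R s a := by
  have hs := sd_summable P hP0 hP1 μ hμ0 hμ1 γ hγ0 hγ1 π hπ0 hπ1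
  have : HasSum (fun t : ℕ => ∑ s, (γ ^ t * stateDist P π μ t s) * ∑ a, π s a * R s a)
      (∑ s, occ P π μ γ s * ∑ a, π s a * R s a) :=
    (hasSum_sum fun s _ => ((hs s).hasSum.mul_right _))
  rw [← this.tsum_eq, perf]
  apply tsum_congr
  intro t
  simp only [Finset.mul_sum]
  refine Finset.sum_congr rfl fun s _ => Finset.sum_congr rfl fun a _ => ?_
  ring

include hP0 hP1 hμ0 hμ1 hπ0 hπ1 hγ0 hγ1 in
/-- flow tested against a function -/
lemma occ_test (V : S → ℝ) :
    ∑ s, μ s * V s = ∑ s, occ P π μ γ s * (V s - γ * ∑ a, π s a * ∑ s', P s a s' * V s') := by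
  have hf := occ_flow P hP0 hP1 μ hμ0 hμ1 γ hγ0 hγ1 π hπ0 hπ1
  have h1 : ∑ s, occ P π μ γ s * V s
      = ∑ s', (μ s' + γ * ∑ s, ∑ a, π s a * P s a s' * occ P π μ γ s) * V s' :=
    Finset.sum_congr rfl fun s _ => by rw [← hf s]
  simp_rw [mul_sub, Finset.sum_sub_distrib]
  rw [h1]
  simp_rw [add_mul, Finset.sum_add_distrib]
  rw [eq_sub_iff_add_eq, add_right_inj]
  have h2 : ∀ s' : S, (γ * ∑ s, ∑ a, π s a * P s a s' * occ P π μ γ s) * V s'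
      = ∑ s, ∑ a, γ * (π s a * P s a s' * occ P π μ γ s) * V s' := by
    intro s'; simp_rw [Finset.mul_sum, Finset.sum_mul]
  have h3 : ∀ s : S, occ P π μ γ s * (γ * ∑ a, π s a * ∑ s', P s a s' * V s')
      = ∑ s', ∑ a, γ * (π s a * P s a s' * occ P π μ γ s) * V s' := by
    intro s
    simp_rw [Finset.mul_sum]
    rw [Finset.sum_comm]
    refine Finset.sum_congr rfl fun s' _ => Finset.sum_congr rfl fun a _ => ?_
    ring
  simp_rw [h2, h3]
  exact Finset.sum_comm

/-- iterated rewards -/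
def itv (P : S → A → S → ℝ) (π : S → A → ℝ) (R : S → A → ℝ) : ℕ → S → ℝ
  | 0 => fun s => ∑ a, π s a * R s a
  | t + 1 => fun s => ∑ a, π s a * ∑ s', P s a s' * itv P π R t s'

lemma avg_abs {X : Type*} [Fintype X] (p f : X → ℝ) (hp : ∀ x, 0 ≤ p x) (hp1 : ∑ x, p x = 1)
    (C : ℝ) (hf : ∀ x, |f x| ≤ C) : |∑ x, p x * f x| ≤ C := by
  calc _ ≤ ∑ x, |p x * f x| := Finset.abs_sum_le_sum_abs _ _
    _ ≤ ∑ x, p x * C := Finset.sum_le_sum fun x _ => by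
        rw [abs_mul, abs_of_nonneg (hp x)]; exact mul_le_mul_of_nonneg_left (hf x) (hp x)
    _ = C := by rw [← Finset.sum_mul, hp1, one_mul]

include hP0 hP1 hπ0 hπ1 hγ0 hγ1 in
lemma exists_value (R : S → A → ℝ) (Rmax : ℝ) (hR : ∀ s a, |R s a| ≤ Rmax) :
    ∃ V : S → ℝ, (∀ s, V s = ∑ a, π s a * (R s a + γ * ∑ s', P s a s' * V s')) ∧
      ∀ s, |V s| ≤ Rmax / (1 - γ) := by
  have hb : ∀ t s, |itv P π R t s| ≤ Rmax := by
    intro t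
    induction t with
    | zero => intro s; exact avg_abs _ _ (hπ0 s) (hπ1 s) _ (hR s)
    | succ t ih =>
      intro s
      exact avg_abs _ _ (hπ0 s) (hπ1 s) _ fun a => avg_abs _ _ (hP0 s a) (hP1 s a) _ ih
  have hg : HasSum (fun t : ℕ => γ^t * Rmax) (Rmax / (1 - γ)) := by
    rw [div_eq_inv_mul]; exact (hasSum_geometric_of_lt_one hγ0 hγ1).mul_right _
  have hbt : ∀ s, ∀ t : ℕ, ‖γ^t * itv P π R t s‖ ≤ γ^t * Rmax := by
    intro s t
    rw [Real.norm_eq_abs, abs_mul, abs_of_nonneg (pow_nonneg hγ0 t)]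
    exact mul_le_mul_of_nonneg_left (hb t s) (pow_nonneg hγ0 t)
  have hs : ∀ s, Summable fun t : ℕ => γ^t * itv P π R t s := fun s =>
    Summable.of_norm_bounded hg.summable (hbt s)
  refine ⟨fun s => ∑' t : ℕ, γ^t * itv P π R t s, ?_, fun s => tsum_of_norm_bounded hg (hbt s)⟩
  intro s
  have : HasSum (fun t : ℕ => γ * ∑ a, π s a * ∑ s', P s a s' * (γ ^ t * itv P π R t s'))
      (γ * ∑ a, π s a * ∑ s', P s a s' * ∑' t : ℕ, γ^t * itv P π R t s') :=
    (hasSum_sum fun a _ => (hasSum_sum fun s' _ => ((hs s').hasSum.mul_left _)).mul_left _).mul_left _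
  have e : ∑ a, π s a * (R s a + γ * ∑ s', P s a s' * ∑' t : ℕ, γ^t * itv P π R t s')
      = (∑ a, π s a * R s a) +
        γ * ∑ a, π s a * ∑ s', P s a s' * ∑' t : ℕ, γ^t * itv P π R t s' := by
    rw [Finset.mul_sum, ← Finset.sum_add_distrib]
    refine Finset.sum_congr rfl fun a _ => ?_
    ring
  show (∑' t : ℕ, γ^t * itv P π R t s) = _
  rw [e, ← this.tsum_eq, (hs s).tsum_eq_zero_add]
  congr 1
  · simp [itv]
  · apply tsum_congr
    intro t
    simp only [itv, Finset.mul_sum]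
    refine Finset.sum_congr rfl fun s _ => Finset.sum_congr rfl fun a _ => ?_
    ring

end mdp

lemma marg_sum {S Z : Type*} [Fintype S] [Fintype Z] [DecidableEq Z] (φ : S → Z) (f : S → Z → ℝ) :
    ∑ z, ∑ s, (if φ s = z then f s z else 0) = ∑ s, f s (φ s) := by
  rw [Finset.sum_comm]
  refine Finset.sum_congr rfl fun s _ => ?_
  simp

lemma latent_term [Fintype S] [Fintype A] [Fintype Z] [DecidableEq Z]
    (d : S → ℝ) (hd0 : ∀ s, 0 ≤ d s) (hd1 : ∑ s, d s = 1)
    (πstar : S → A → ℝ)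
    (hπs0 : ∀ s a, 0 ≤ πstar s a) (hπs1 : ∀ s, ∑ a : A, πstar s a = 1)
    (φ : S → Z)
    (πZ : Z → A → ℝ) (hπZ0 : ∀ z a, 0 < πZ z a) (hπZ1 : ∀ z, ∑ a : A, πZ z a = 1)
    (Q : Z → A → ℝ) (C : ℝ) (hC : 0 ≤ C) (hQ : ∀ z a, |Q z a| ≤ C) :
    |∑ s, d s * ∑ a, (πZ (φ s) a - πstar s a) * Q (φ s) a| ≤
      2 * C * Real.sqrt ((1 / 2) * ∑ z : Z, margDist φ d z *
              dKL (margPolicy φ d πstar z) (πZ z)) := by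
  have hm0 : ∀ z, 0 ≤ margDist φ d z := fun z => Finset.sum_nonneg fun s _ => by
    split_ifs <;> simp [hd0]
  have hm1 : ∑ z, margDist φ d z = 1 := by
    rw [← hd1]; exact marg_sum φ (fun s _ => d s)
  have hmul : ∀ z a, margDist φ d z * margPolicy φ d πstar z a
      = ∑ s : S, if φ s = z then d s * πstar s a else 0 := by
    intro z a
    rw [margPolicy]
    rcases (hm0 z).eq_or_lt with h | h
    · rw [← h, zero_mul]
      symm
      apply Finset.sum_eq_zero
      intro s hs
      have := (Finset.sum_eq_zero_iff_of_nonneg (fun s _ => by split_ifs <;> simp [hd0])).1 h.symm s hs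
      split_ifs with hh
      · rw [if_pos hh] at this; simp [this]
      · rfl
    · field_simp
  have e : ∑ s, d s * ∑ a, (πZ (φ s) a - πstar s a) * Q (φ s) a
      = ∑ z, margDist φ d z * ∑ a, (πZ z a - margPolicy φ d πstar z a) * Q z a := by
    rw [← marg_sum φ (fun s z => d s * ∑ a, (πZ z a - πstar s a) * Q z a)]
    refine Finset.sum_congr rfl fun z _ => ?_
    have : margDist φ d z * ∑ a, (πZ z a - margPolicy φ d πstar z a) * Q z a
        = ∑ a, ((margDist φ d z) * πZ z a - margDist φ d z * margPolicy φ d πstar z a) * Q z a := by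
      rw [Finset.mul_sum]; refine Finset.sum_congr rfl fun a _ => ?_; ring
    rw [this]
    simp_rw [hmul, margDist, Finset.sum_mul, ← Finset.sum_sub_distrib, Finset.sum_mul]
    rw [Finset.sum_comm]
    refine Finset.sum_congr rfl fun s _ => ?_
    split_ifs
    · rw [Finset.mul_sum]; refine Finset.sum_congr rfl fun a _ => ?_; ring
    · simp
  have hj := aux_jensen (margDist φ d) (fun z => 1/2 * ∑ a, |margPolicy φ d πstar z a - πZ z a|)
    (fun z => 1/2 * dKL (margPolicy φ d πstar z) (πZ z)) hm0 hm1 (by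
      intro z hz
      apply aux_pinsker _ _ _ (fun a => (hπZ0 z a).le) _ (hπZ1 z) (fun a _ => hπZ0 z a)
      · intro a
        refine div_nonneg (Finset.sum_nonneg fun s _ => ?_) hz.le
        split_ifs
        · exact mul_nonneg (hd0 s) (hπs0 s a)
        · exact le_rfl
      · unfold margPolicy
        rw [← Finset.sum_div, div_eq_one_iff_eq hz.ne', Finset.sum_comm, margDist]
        refine Finset.sum_congr rfl fun s _ => ?_
        split_ifs
        · rw [← Finset.mul_sum, hπs1, mul_one]
        · simp)
  have e2 : (1 / 2) * ∑ z : Z, margDist φ d z * dKL (margPolicy φ d πstar z) (πZ z)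
      = ∑ z : Z, margDist φ d z * (1/2 * dKL (margPolicy φ d πstar z) (πZ z)) := by
    rw [Finset.mul_sum]; refine Finset.sum_congr rfl fun a _ => ?_; ring
  rw [e, e2]
  calc _ ≤ ∑ z, |margDist φ d z * ∑ a, (πZ z a - margPolicy φ d πstar z a) * Q z a| :=
        Finset.abs_sum_le_sum_abs _ _
    _ ≤ ∑ z, 2 * C * (margDist φ d z * (1/2 * ∑ a, |margPolicy φ d πstar z a - πZ z a|)) := by
        refine Finset.sum_le_sum fun z _ => ?_
        rw [abs_mul, abs_of_nonneg (hm0 z)]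
        have : |∑ a, (πZ z a - margPolicy φ d πstar z a) * Q z a|
            ≤ (∑ a, |margPolicy φ d πstar z a - πZ z a|) * C := by
          rw [Finset.sum_mul]
          refine (Finset.abs_sum_le_sum_abs _ _).trans (Finset.sum_le_sum fun a _ => ?_)
          rw [abs_mul, abs_sub_comm]
          exact mul_le_mul_of_nonneg_left (hQ z a) (abs_nonneg _)
        calc _ ≤ _ := mul_le_mul_of_nonneg_left this (hm0 z)
          _ = _ := by ring
    _ = 2 * C * ∑ z, margDist φ d z * (1/2 * ∑ a, |margPolicy φ d πstar z a - πZ z a|) := by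
        rw [Finset.mul_sum]
    _ ≤ _ := mul_le_mul_of_nonneg_left hj (by positivity)

lemma pol_term [Fintype S] [Fintype A] (d : S → ℝ) (hd0 : ∀ s, 0 ≤ d s)
    (p q : S → A → ℝ) (hp0 : ∀ s a, 0 ≤ p s a) (hp1 : ∀ s, ∑ a : A, p s a = 1)
    (hq0 : ∀ s a, 0 ≤ q s a) (hq1 : ∀ s, ∑ a : A, q s a = 1) (F G : S → A → ℝ)
    (h : ∀ s a, |F s a| ≤ G s a) :
    |∑ s, d s * ∑ a, (p s a - q s a) * F s a| ≤ ∑ s, d s * ∑ a, G s a := by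
  refine (Finset.abs_sum_le_sum_abs _ _).trans (Finset.sum_le_sum fun s _ => ?_)
  rw [abs_mul, abs_of_nonneg (hd0 s)]
  refine mul_le_mul_of_nonneg_left ?_ (hd0 s)
  refine (Finset.abs_sum_le_sum_abs _ _).trans (Finset.sum_le_sum fun a _ => ?_)
  rw [abs_mul]
  have hp : p s a ≤ 1 := by
    rw [← hp1 s]; exact Finset.single_le_sum (fun a _ => hp0 s a) (Finset.mem_univ a)
  have hq : q s a ≤ 1 := by
    rw [← hq1 s]; exact Finset.single_le_sum (fun a _ => hq0 s a) (Finset.mem_univ a)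
  have : |p s a - q s a| ≤ 1 := by
    rw [abs_le]; constructor <;> linarith [hp0 s a, hq0 s a]
  calc _ ≤ 1 * |F s a| := mul_le_mul_of_nonneg_right this (abs_nonneg _)
    _ ≤ _ := by rw [one_mul]; exact h s a

theorem off_policy_representation_bound
    [Fintype S] [Fintype A] [Fintype Z] [Nonempty S] [Nonempty A] [DecidableEq Z]
    (P : S → A → S → ℝ) (hP0 : ∀ s a s', 0 ≤ P s a s')
    (hP1 : ∀ s a, ∑ s' : S, P s a s' = 1)
    (R : S → A → ℝ) (Rmax : ℝ) (hRmax : 0 ≤ Rmax) (hR : ∀ s a, |R s a| ≤ Rmax)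
    (μ : S → ℝ) (hμ0 : ∀ s, 0 ≤ μ s) (hμ1 : ∑ s : S, μ s = 1)
    (γ : ℝ) (hγ0 : 0 ≤ γ) (hγ1 : γ < 1)
    (πstar : S → A → ℝ)
    (hπs0 : ∀ s a, 0 ≤ πstar s a) (hπs1 : ∀ s, ∑ a : A, πstar s a = 1)
    (doff : S → ℝ) (hdoff0 : ∀ s, 0 ≤ doff s) (hdoff1 : ∑ s : S, doff s = 1)
    (hsupp : ∀ s, 0 < visitation P πstar μ γ s → 0 < doff s)
    (φ : S → Z)
    (RZ : Z → A → ℝ) (hRZ : ∀ z a, |RZ z a| ≤ Rmax)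
    (PZ : Z → A → S → ℝ) (hPZ0 : ∀ z a s', 0 ≤ PZ z a s')
    (hPZ1 : ∀ z a, ∑ s' : S, PZ z a s' = 1)
    (hPZpos : ∀ s a s', 0 < P s a s' → 0 < doff s → 0 < PZ (φ s) a s')
    (πZ : Z → A → ℝ) (hπZ0 : ∀ z a, 0 < πZ z a) (hπZ1 : ∀ z, ∑ a : A, πZ z a = 1) :
    perfDiff P R μ γ (fun s => πZ (φ s)) πstar ≤
      (1 + Real.sqrt (dChi2 (visitation P πstar μ γ) doff)) *
          ((Fintype.card A : ℝ) / (1 - γ) *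
              Real.sqrt (∑ s : S, doff s *
                ((1 / (Fintype.card A : ℝ)) * ∑ a : A, (R s a - RZ (φ s) a) ^ 2))
            + 2 * γ * (Fintype.card A : ℝ) * Rmax / (1 - γ) ^ 2 *
              Real.sqrt ((1 / 2) * ∑ s : S, doff s *
                ((1 / (Fintype.card A : ℝ)) * ∑ a : A, dKL (P s a) (PZ (φ s) a))))
        + (2 * Rmax / (1 - γ) ^ 2) *
            Real.sqrt ((1 / 2) * ∑ z : Z, margDist φ (visitation P πstar μ γ) z *
              dKL (margPolicy φ (visitation P πstar μ γ) πstar z) (πZ z)) := by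
  have h1γ : 0 < 1 - γ := by linarith
  have hπ0 : ∀ s a, 0 ≤ (fun s => πZ (φ s)) s a := fun s a => (hπZ0 _ a).le
  have hπ1 : ∀ s, ∑ a : A, (fun s => πZ (φ s)) s a = 1 := fun s => hπZ1 _
  obtain ⟨V, hV, hVb⟩ := exists_value P hP0 hP1 γ hγ0 hγ1 (fun s => πZ (φ s)) hπ0 hπ1 R Rmax hR
  have hpd : perf P R (fun s => πZ (φ s)) μ γ - perf P R πstar μ γ
      = ∑ s, occ P πstar μ γ s * ∑ a, (πZ (φ s) a - πstar s a) *
          (R s a + γ * ∑ s', P s a s' * V s') := by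
    have t1 := occ_test P hP0 hP1 μ hμ0 hμ1 γ hγ0 hγ1 _ hπ0 hπ1 V
    have t2 := occ_test P hP0 hP1 μ hμ0 hμ1 γ hγ0 hγ1 πstar hπs0 hπs1 V
    rw [perf_occ P hP0 hP1 μ hμ0 hμ1 γ hγ0 hγ1 _ hπ0 hπ1,
      perf_occ P hP0 hP1 μ hμ0 hμ1 γ hγ0 hγ1 _ hπs0 hπs1]
    have e1 : ∑ s, occ P (fun s => πZ (φ s)) μ γ s * ∑ a, (fun s => πZ (φ s)) s a * R s a
        = ∑ s, μ s * V s := by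
      rw [t1]
      refine Finset.sum_congr rfl fun s _ => ?_
      congr 1
      nth_rewrite 1 [hV s]
      rw [Finset.mul_sum, ← Finset.sum_sub_distrib]
      refine Finset.sum_congr rfl fun a _ => ?_
      ring
    rw [e1, t2, ← Finset.sum_sub_distrib]
    refine Finset.sum_congr rfl fun s _ => ?_
    rw [← mul_sub]
    congr 1
    nth_rewrite 1 [hV s]
    rw [Finset.mul_sum, ← Finset.sum_sub_distrib, ← Finset.sum_sub_distrib]
    refine Finset.sum_congr rfl fun a _ => ?_
    ring
  have hocc0 : ∀ s, 0 ≤ occ P πstar μ γ s := fun s => tsum_nonneg fun t =>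
    mul_nonneg (pow_nonneg hγ0 t) (sd_nonneg P hP0 μ hμ0 πstar hπs0 t s)
  have hvis : ∀ s, visitation P πstar μ γ s = (1 - γ) * occ P πstar μ γ s := fun s => rfl
  have hd1 : ∑ s, visitation P πstar μ γ s = 1 := by
    have t := occ_test P hP0 hP1 μ hμ0 hμ1 γ hγ0 hγ1 πstar hπs0 hπs1 (fun _ => 1)
    simp only [mul_one, hP1, hπs1, hμ1] at t
    rw [t]
    exact Finset.sum_congr rfl fun s _ => by rw [hvis]; ring
  have hd0 : ∀ s, 0 ≤ visitation P πstar μ γ s := fun s => mul_nonneg h1γ.le (hocc0 s)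
  set d := visitation P πstar μ γ with hd
  set C := Rmax / (1 - γ) with hCdef
  have hC0 : 0 ≤ C := by positivity
  -- decompose
  have hdec : (1 - γ) * (perf P R (fun s => πZ (φ s)) μ γ - perf P R πstar μ γ)
      = ∑ s, d s * ∑ a, (πZ (φ s) a - πstar s a) *
            (RZ (φ s) a + γ * ∑ s', PZ (φ s) a s' * V s')
        + ∑ s, d s * ∑ a, (πZ (φ s) a - πstar s a) * (R s a - RZ (φ s) a)
        + γ * ∑ s, d s * ∑ a, (πZ (φ s) a - πstar s a) *
            ∑ s', (P s a s' - PZ (φ s) a s') * V s' := by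
    rw [hpd, Finset.mul_sum, Finset.mul_sum, ← Finset.sum_add_distrib, ← Finset.sum_add_distrib]
    refine Finset.sum_congr rfl fun s _ => ?_
    rw [hvis, ← mul_assoc, mul_left_comm γ, ← mul_add, ← mul_add]
    congr 1
    rw [Finset.mul_sum, ← Finset.sum_add_distrib, ← Finset.sum_add_distrib]
    refine Finset.sum_congr rfl fun a _ => ?_
    simp_rw [sub_mul, Finset.sum_sub_distrib]
    ring
  have b1 := latent_term d hd0 hd1 πstar hπs0 hπs1 φ πZ hπZ0 hπZ1
    (fun z a => RZ z a + γ * ∑ s', PZ z a s' * V s') C hC0 (by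
      intro z a
      have h1 := avg_abs (PZ z a) V (hPZ0 z a) (hPZ1 z a) C hVb
      calc _ ≤ |RZ z a| + |γ * ∑ s', PZ z a s' * V s'| := abs_add_le _ _
        _ ≤ Rmax + γ * C := by
          rw [abs_mul, abs_of_nonneg hγ0]
          exact add_le_add (hRZ z a) (mul_le_mul_of_nonneg_left h1 hγ0)
        _ = C := by rw [hCdef]; field_simp; ring)
  have b2 := (pol_term d hd0 (fun s => πZ (φ s)) πstar hπ0 hπ1 hπs0 hπs1
    (fun s a => R s a - RZ (φ s) a) (fun s a => |R s a - RZ (φ s) a|) (fun _ _ => le_rfl)).trans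
    (aux_change2 d doff _ (fun s a => (R s a - RZ (φ s) a)^2) hd0 hdoff0 hsupp hdoff1
      (fun s a _ => (sq_abs _).le))
  have b3 := pol_term d hd0 (fun s => πZ (φ s)) πstar hπ0 hπ1 hπs0 hπs1
    (fun s a => ∑ s', (P s a s' - PZ (φ s) a s') * V s')
    (fun s a => 2 * C * (1/2 * ∑ s', |P s a s' - PZ (φ s) a s'|)) (by
      intro s a
      calc _ ≤ ∑ s', |(P s a s' - PZ (φ s) a s') * V s'| := Finset.abs_sum_le_sum_abs _ _
        _ ≤ ∑ s', |P s a s' - PZ (φ s) a s'| * C := Finset.sum_le_sum fun s' _ => by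
          rw [abs_mul]; exact mul_le_mul_of_nonneg_left (hVb s') (abs_nonneg _)
        _ = _ := by rw [← Finset.sum_mul]; ring)
  have b3' := aux_change2 d doff (fun s a => 1/2 * ∑ s', |P s a s' - PZ (φ s) a s'|)
    (fun s a => 1/2 * dKL (P s a) (PZ (φ s) a)) hd0 hdoff0 hsupp hdoff1
    (fun s a hs => aux_pinsker _ _ (hP0 s a) (hPZ0 _ a) (hP1 s a) (hPZ1 _ a)
      (fun s' h' => hPZpos s a s' h' hs))
  have e3 : ∑ s, d s * ∑ a, 2 * C * (1/2 * ∑ s', |P s a s' - PZ (φ s) a s'|)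
      = 2 * C * ∑ s, d s * ∑ a, (1/2 * ∑ s', |P s a s' - PZ (φ s) a s'|) := by
    rw [Finset.mul_sum]
    refine Finset.sum_congr rfl fun s _ => ?_
    rw [← Finset.mul_sum]; ring
  have e4 : ∑ s, doff s * ((1 / (Fintype.card A : ℝ)) * ∑ a, 1/2 * dKL (P s a) (PZ (φ s) a))
      = (1 / 2) * ∑ s : S, doff s *
                ((1 / (Fintype.card A : ℝ)) * ∑ a : A, dKL (P s a) (PZ (φ s) a)) := by
    rw [Finset.mul_sum]
    refine Finset.sum_congr rfl fun s _ => ?_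
    rw [← Finset.mul_sum]; ring
  rw [e3] at b3
  rw [e4] at b3'
  have b3'' := b3.trans (mul_le_mul_of_nonneg_left b3' (by positivity : 0 ≤ 2 * C))
  clear b3 b3' e3 e4
  have b4 := add_le_add (add_le_add b1 b2) (mul_le_mul_of_nonneg_left b3'' hγ0)
  have hpe : (1 - γ) * perfDiff P R μ γ (fun s => πZ (φ s)) πstar
      = |(1 - γ) * (perf P R (fun s => πZ (φ s)) μ γ - perf P R πstar μ γ)| := by
    rw [abs_mul, abs_of_pos h1γ, perfDiff]
  rw [hdec] at hpe
  have tri : ∀ x y z : ℝ, |x + y + γ * z| ≤ |x| + |y| + γ * |z| := fun x y z => by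
    have := abs_add_le (x + y) (γ * z)
    rw [abs_mul, abs_of_nonneg hγ0] at this
    linarith [abs_add_le x y]
  have hfin := (hpe.le.trans (tri _ _ _)).trans b4
  rw [← le_div_iff₀' h1γ] at hfin
  refine hfin.trans (le_of_eq ?_)
  clear hfin b4 b1 b2 b3''
  generalize Real.sqrt (∑ s : S, doff s *
    ((1 / (Fintype.card A : ℝ)) * ∑ a : A, (R s a - RZ (φ s) a) ^ 2)) = X1
  generalize Real.sqrt ((1 / 2) * ∑ s : S, doff s *
    ((1 / (Fintype.card A : ℝ)) * ∑ a : A, dKL (P s a) (PZ (φ s) a))) = X2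
  generalize Real.sqrt ((1 / 2) * ∑ z : Z, margDist φ d z *
              dKL (margPolicy φ d πstar z) (πZ z)) = X3
  generalize Real.sqrt (dChi2 d doff) = X4
  rw [hCdef]
  field_simp
  ring
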